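/- Let f : ℂ → ℂ be a transcendental entire function. Then either the set K(f) ∩ ∂K(f) is connected, or else for every point z ∈ ∂K(f) and every open neighbourhood V of z, the set of connected components of K(f) ∩ ∂K(f) that meet V is uncountable. -/

import Mathlib

open Filter Topology

/-- The set `K(f)` of points whose orbit under iteration of `f` is bounded. -/
def boundedOrbitSet (f : ℂ → ℂ) : Set ℂ :=
  {z : ℂ | Bornology.IsBounded (Set.range fun n : ℕ => f^[n] z)}

/-- `f` is a transcendental entire function: holomorphic on all of `ℂ` and not a polynomial. -/
def TranscendentalEntire (f : ℂ → ℂ) : Prop :=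
  Differentiable ℂ f ∧ ¬∃ p : Polynomial ℂ, ∀ z, f z = p.eval z


namespace KJ
open Metric Set

lemma log_lift {c : ℂ} {r : ℝ} {g : ℂ → ℂ} (hg : DifferentiableOn ℂ g (ball c r))
    (h0 : ∀ z ∈ ball c r, g z ≠ 0) :
    ∃ L : ℂ → ℂ, DifferentiableOn ℂ L (ball c r) ∧ ∀ z ∈ ball c r, Complex.exp (L z) = g z := by
  rcases le_or_gt r 0 with hr | hr
  · refine ⟨fun _ => 0, by fun_prop, fun z hz => ?_⟩
    rw [ball_eq_empty.2 hr] at hz; exact absurd hz (by simp)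
  have hd : DifferentiableOn ℂ (fun z => deriv g z / g z) (ball c r) :=
    (hg.deriv isOpen_ball).div hg h0
  obtain ⟨L, hL0, hL⟩ := hd.isExactOn_ball.with_val_at c (Complex.log (g c))
  have hc : c ∈ ball c r := mem_ball_self hr
  refine ⟨L, fun z hz => (hL z hz).differentiableAt.differentiableWithinAt, fun z hz => ?_⟩
  have hder : ∀ w ∈ ball c r, HasDerivAt (fun w => g w * Complex.exp (-L w)) 0 w := by
    intro w hw
    have h1 : HasDerivAt g (deriv g w) w := (hg.differentiableAt (isOpen_ball.mem_nhds hw)).hasDerivAt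
    have h2 := h1.mul ((hL w hw).neg.cexp)
    refine h2.congr_deriv ?_
    have := h0 w hw
    field_simp
    ring
  have hconst : g z * Complex.exp (-L z) = g c * Complex.exp (-L c) := by
    refine (convex_ball c r).is_const_of_fderivWithin_eq_zero (𝕜 := ℂ) (f := fun w => g w * Complex.exp (-L w)) ?_ ?_ hz hc
    · intro w hw; exact (hder w hw).differentiableAt.differentiableWithinAt
    · intro w hw
      rw [fderivWithin_of_isOpen isOpen_ball hw]
      ext
      simp [(hder w hw).deriv]
  have hone : g c * Complex.exp (-L c) = 1 := by
    rw [hL0, Complex.exp_neg, Complex.exp_log (h0 c hc), mul_inv_cancel₀ (h0 c hc)]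
  rw [hone, Complex.exp_neg] at hconst
  have := Complex.exp_ne_zero (L z)
  field_simp at hconst
  exact hconst.symm

lemma cos_lift {c : ℂ} {r : ℝ} (hr : 0 < r) {u : ℂ → ℂ} (hu : DifferentiableOn ℂ u (ball c r))
    (h1 : ∀ z ∈ ball c r, u z ≠ 1) (h2 : ∀ z ∈ ball c r, u z ≠ -1) :
    ∃ F : ℂ → ℂ, DifferentiableOn ℂ F (ball c r) ∧
      (∀ z ∈ ball c r, Complex.cos (Real.pi * F z) = u z) ∧ ‖F c‖ ≤ 1 + ‖u c‖ := by
  have hc : c ∈ ball c r := mem_ball_self hr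
  obtain ⟨L, hLd, hL⟩ := log_lift (g := fun z => 1 - u z ^ 2) (c := c) (r := r) (by fun_prop) (by
    intro z hz h
    have : (1 - u z) * (1 + u z) = 0 := by linear_combination h
    rcases mul_eq_zero.1 this with h | h
    · exact h1 z hz (by linear_combination -h)
    · exact h2 z hz (by linear_combination h))
  set s : ℂ → ℂ := fun z => Complex.exp (L z / 2) with hs
  have hs2 : ∀ z ∈ ball c r, s z ^ 2 = 1 - u z ^ 2 := by
    intro z hz
    rw [← hL z hz, hs]
    simp only
    rw [← Complex.exp_nat_mul]
    congr 1; push_cast; ring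
  have hsd : DifferentiableOn ℂ s (ball c r) := by
    rw [hs]; fun_prop
  have hprod : ∀ z ∈ ball c r, (u z + Complex.I * s z) * (u z - Complex.I * s z) = 1 := by
    intro z hz
    linear_combination hs2 z hz - s z ^ 2 * Complex.I_sq
  obtain ⟨G, hGd, hG⟩ := log_lift (g := fun z => u z + Complex.I * s z) (c := c) (r := r) (by fun_prop)
    (fun z hz h => by
      have := hprod z hz
      rw [h] at this; simp at this)
  have hpi : (Real.pi : ℂ) ≠ 0 := by exact_mod_cast Real.pi_ne_zero
  set k : ℤ := round ((G c / (Complex.I * Real.pi)).re / 2) with hk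
  refine ⟨fun z => G z / (Complex.I * Real.pi) - 2 * k, by fun_prop, ?_, ?_⟩
  · intro z hz
    have e1 : (Real.pi : ℂ) * (G z / (Complex.I * Real.pi) - 2 * k) = G z / Complex.I - k * (2 * Real.pi) := by
      field_simp
    simp only
    rw [e1, Complex.cos_sub_int_mul_two_pi, Complex.cos]
    have e2 : G z / Complex.I * Complex.I = G z := by field_simp
    have e3 : -(G z / Complex.I) * Complex.I = -G z := by field_simp
    rw [e2, e3, Complex.exp_neg, hG z hz]
    rw [inv_eq_of_mul_eq_one_right (hprod z hz)]
    ring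
  · set w := G c / (Complex.I * Real.pi) - 2 * k with hw
    have hcos : Complex.cos (Real.pi * w) = u c := by
      have e1 : (Real.pi : ℂ) * w = G c / Complex.I - k * (2 * Real.pi) := by
        rw [hw]; field_simp
      rw [e1, Complex.cos_sub_int_mul_two_pi, Complex.cos]
      have e2 : G c / Complex.I * Complex.I = G c := by field_simp
      have e3 : -(G c / Complex.I) * Complex.I = -G c := by field_simp
      rw [e2, e3, Complex.exp_neg, hG c hc]
      rw [inv_eq_of_mul_eq_one_right (hprod c hc)]
      ring
    have hre : |w.re| ≤ 1 := by
      have := abs_sub_round ((G c / (Complex.I * Real.pi)).re / 2)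
      rw [← hk] at this
      have e : w.re = 2 * ((G c / (Complex.I * Real.pi)).re / 2 - k) := by
        rw [hw]; simp; ring
      rw [e, abs_mul]; norm_num; linarith
    have him : |w.im| ≤ ‖u c‖ := by
      rw [← hcos, Complex.cos]
      have n1 : ‖Complex.exp (Real.pi * w * Complex.I)‖ = Real.exp (-(Real.pi * w.im)) := by
        rw [Complex.norm_exp]; simp
      have n2 : ‖Complex.exp (-(Real.pi * w) * Complex.I)‖ = Real.exp (Real.pi * w.im) := by
        rw [Complex.norm_exp]; simp
      have t := abs_norm_sub_norm_le (Complex.exp (-(Real.pi * w) * Complex.I)) (-Complex.exp (Real.pi * w * Complex.I))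
      rw [norm_neg, n1, n2, sub_neg_eq_add, add_comm (Complex.exp (-(Real.pi * w) * Complex.I))] at t
      rw [norm_div, Complex.norm_two]
      have t2 : |Real.sinh (Real.pi * w.im)| = |Real.exp (Real.pi * w.im) - Real.exp (-(Real.pi * w.im))| / 2 := by
        rw [Real.sinh_eq, abs_div]; norm_num
      have t3 : |Real.pi * w.im| ≤ |Real.sinh (Real.pi * w.im)| := by
        rw [Real.abs_sinh]
        exact Real.self_le_sinh_iff.2 (abs_nonneg _)
      rw [abs_mul, abs_of_pos Real.pi_pos] at t3
      have := Real.pi_gt_three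
      nlinarith [abs_nonneg w.im]
    calc ‖w‖ ≤ |w.re| + |w.im| := Complex.norm_le_abs_re_add_abs_im w
      _ ≤ _ := by linarith

lemma bloch_aux {g : ℂ → ℂ} {p : ℂ} {t m : ℝ} (ht : 0 < t) (hm : 0 < m)
    (hg : DifferentiableOn ℂ g (ball p t)) (hp : ‖deriv g p‖ = m)
    (hb : ∀ z ∈ ball p t, ‖deriv g z‖ ≤ 2 * m) :
    ball (g p) (m * t / 24) ⊆ g '' ball p t := by
  have hsub : closedBall p (t/6) ⊆ ball p t := closedBall_subset_ball (by linarith)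
  have hsch : ∀ z ∈ ball p t, dist (deriv g z) (deriv g p) ≤ 3 * m / t * dist z p := by
    intro z hz
    refine Complex.dist_le_div_mul_dist_of_mapsTo_ball (hg.deriv isOpen_ball) ?_ hz
    intro w hw
    rw [mem_closedBall, dist_eq_norm]
    calc _ ≤ ‖deriv g w‖ + ‖deriv g p‖ := norm_sub_le _ _
      _ ≤ _ := by rw [hp]; linarith [hb w hw]
  have key : ∀ z ∈ sphere p (t/6), m * t / 12 ≤ ‖g z - g p‖ := by
    intro z hz
    have hmv : ‖(g z - deriv g p * z) - (g p - deriv g p * p)‖ ≤ (m / 2) * ‖z - p‖ := by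
      refine (convex_closedBall p (t/6)).norm_image_sub_le_of_norm_hasDerivWithin_le
        (f := fun z => g z - deriv g p * z) (f' := fun z => deriv g z - deriv g p) ?_ ?_
        (mem_closedBall_self (by positivity)) (sphere_subset_closedBall hz)
      · intro x hx
        have := (hg.differentiableAt (isOpen_ball.mem_nhds (hsub hx))).hasDerivAt
        exact ((this.sub ((hasDerivAt_id x).const_mul (deriv g p))).congr_deriv (by simp)).hasDerivWithinAt
      · intro x hx
        have := hsch x (hsub hx)
        rw [dist_eq_norm] at this
        refine this.trans ?_
        rw [mem_closedBall] at hx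
        calc 3 * m / t * dist x p ≤ 3 * m / t * (t / 6) := by gcongr
          _ = m / 2 := by field_simp; norm_num
    have hz' : ‖z - p‖ = t / 6 := by rw [← dist_eq_norm]; exact hz
    have e : (g z - deriv g p * z) - (g p - deriv g p * p) = (g z - g p) - deriv g p * (z - p) := by ring
    rw [e, hz'] at hmv
    have t1 := norm_sub_norm_le (deriv g p * (z - p)) (g z - g p)
    rw [norm_sub_rev (deriv g p * (z - p)), norm_mul, hp, hz'] at t1
    linarith
  have hD : DiffContOnCl ℂ g (ball p (t/6)) := by
    refine (hg.mono ?_).diffContOnCl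
    exact (closure_ball_subset_closedBall).trans hsub
  have hfreq : ∃ᶠ z in 𝓝 p, g z ≠ g p := by
    intro h
    have h' : g =ᶠ[𝓝 p] fun _ => g p := by
      filter_upwards [h] with z hz using not_not.1 hz
    have := h'.deriv_eq
    simp only [deriv_const] at this
    rw [this] at hp; simp at hp; linarith
  have := hD.ball_subset_image_closedBall (by positivity) key hfreq
  have e : m * t / 12 / 2 = m * t / 24 := by ring
  rw [e] at this
  exact this.trans (image_mono hsub)

lemma bloch {g : ℂ → ℂ} {c : ℂ} {r : ℝ} (hr : 0 < r) (hg : DifferentiableOn ℂ g (ball c r))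
    (hno : ∀ w, ¬ ball w 2 ⊆ g '' ball c r) : ‖deriv g c‖ ≤ 192 / r := by
  by_contra hcon
  push Not at hcon
  have hcon' : 192 < ‖deriv g c‖ * r := by rwa [div_lt_iff₀ hr] at hcon
  have hsub : closedBall c (r/2) ⊆ ball c r := closedBall_subset_ball (by linarith)
  have hdc : ContinuousOn (deriv g) (closedBall c (r/2)) :=
    ((hg.deriv isOpen_ball).continuousOn).mono hsub
  have hcont : ContinuousOn (fun z => (r/2 - dist z c) * ‖deriv g z‖) (closedBall c (r/2)) := by
    fun_prop
  obtain ⟨p, hp, hmax⟩ := (isCompact_closedBall c (r/2)).exists_isMaxOn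
    ⟨c, mem_closedBall_self (by positivity)⟩ hcont
  have hpc : (r/2 - dist c c) * ‖deriv g c‖ ≤ (r/2 - dist p c) * ‖deriv g p‖ :=
    hmax (mem_closedBall_self (by positivity))
  rw [dist_self, sub_zero] at hpc
  have hp' : dist p c ≤ r/2 := hp
  have hpos : 0 < (r/2 - dist p c) * ‖deriv g p‖ := by linarith
  have hm : 0 < ‖deriv g p‖ := by
    by_contra h
    have : ‖deriv g p‖ = 0 := le_antisymm (not_lt.1 h) (norm_nonneg _)
    rw [this] at hpos; simp at hpos
  have ht : 0 < r/2 - dist p c := by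
    by_contra h
    have : r/2 - dist p c = 0 := by linarith
    rw [this] at hpos; simp at hpos
  set t := (r/2 - dist p c)/2 with htd
  have ht0 : 0 < t := by positivity
  have hballs : ball p t ⊆ ball c r := by
    apply ball_subset_ball'
    linarith
  have := bloch_aux ht0 hm (hg.mono hballs) rfl (by
    intro z hz
    have hz' : dist z p < t := hz
    have htri := dist_triangle z p c
    have hzc : z ∈ closedBall c (r/2) := by
      rw [mem_closedBall]; linarith
    have h1 : (r/2 - dist z c) * ‖deriv g z‖ ≤ (r/2 - dist p c) * ‖deriv g p‖ := hmax hzc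
    have h2 : t ≤ r/2 - dist z c := by linarith
    have h3 : t * ‖deriv g z‖ ≤ t * (2 * ‖deriv g p‖) := by
      calc _ ≤ (r/2 - dist z c) * ‖deriv g z‖ := by gcongr
        _ ≤ _ := h1
        _ = _ := by rw [htd]; ring
    exact le_of_mul_le_mul_left h3 ht0)
  refine hno (g p) ((ball_subset_ball ?_).trans (this.trans (image_mono hballs)))
  have : (r/2 - dist p c) = 2 * t := by rw [htd]; ring
  rw [this] at hpc
  linarith

lemma exists_grid (w : ℂ) : ∃ v ∈ ball w 2, ∃ n : ℤ, Complex.cos (Real.pi * v) = n := by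
  have hex : ∀ x : ℝ, 0 ≤ x → ∃ y, x ≤ y ∧ y ≤ x + 1 ∧ ∃ n : ℤ, Real.cosh (Real.pi * y) = n := by
    intro x hx
    have hcont : ContinuousOn (fun y => Real.cosh (Real.pi * y)) (Icc x (x+1)) := by fun_prop
    have hiv := intermediate_value_Icc (by linarith : x ≤ x + 1) hcont
    have hle : (⌈Real.cosh (Real.pi * x)⌉ : ℝ) ≤ Real.cosh (Real.pi * (x+1)) := by
      have h1 := Int.ceil_lt_add_one (Real.cosh (Real.pi * x))
      have h2 : Real.cosh (Real.pi * (x+1)) = Real.cosh (Real.pi * x) * Real.cosh Real.pi + Real.sinh (Real.pi * x) * Real.sinh Real.pi := by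
        rw [mul_add, mul_one, Real.cosh_add]
      have h3 : 0 ≤ Real.sinh (Real.pi * x) * Real.sinh Real.pi :=
        mul_nonneg (Real.sinh_nonneg_iff.2 (by positivity)) (Real.sinh_nonneg_iff.2 (by positivity))
      have h4 : 1 ≤ Real.cosh (Real.pi * x) := Real.one_le_cosh _
      have h5 : 2 ≤ Real.cosh Real.pi := by
        have a := Real.cosh_eq Real.pi
        have b := Real.add_one_le_exp Real.pi
        have d := Real.exp_pos (-Real.pi)
        have := Real.pi_gt_three
        linarith
      nlinarith
    obtain ⟨y, hy, hyn⟩ := hiv ⟨Int.le_ceil _, hle⟩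
    exact ⟨y, hy.1, hy.2, _, hyn⟩
  have hex2 : ∃ y : ℝ, |y - w.im| ≤ 1 ∧ ∃ n : ℤ, Real.cosh (Real.pi * y) = n := by
    rcases le_total 0 w.im with h | h
    · obtain ⟨y, h1, h2, h3⟩ := hex _ h
      exact ⟨y, by rw [abs_le]; constructor <;> linarith, h3⟩
    · obtain ⟨y, h1, h2, h3⟩ := hex (-w.im) (by linarith)
      refine ⟨-y, by rw [abs_le]; constructor <;> linarith, ?_⟩
      rwa [mul_neg, Real.cosh_neg]
  obtain ⟨y, hy, n, hn⟩ := hex2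
  set m : ℤ := round w.re with hm
  refine ⟨(m : ℂ) + y * Complex.I, ?_, ?_⟩
  · rw [mem_ball, dist_eq_norm]
    refine (Complex.norm_le_abs_re_add_abs_im _).trans_lt ?_
    have h1 := abs_sub_round w.re
    rw [← hm, abs_sub_comm] at h1
    simp
    linarith
  · have e : Complex.cos (Real.pi * ((m : ℂ) + y * Complex.I)) = Complex.cos (m * Real.pi) * Complex.cosh (Real.pi * y) := by
      rw [mul_add, ← mul_assoc, Complex.cos_add_mul_I, mul_comm (Real.pi : ℂ) m]
      simp [Complex.sin_int_mul_pi]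
    have e2 : Complex.cos (m * Real.pi) = (((-1 : ℤˣ) ^ m : ℤˣ) : ℤ) := by
      have := Real.cos_int_mul_pi m
      have h : Complex.cos (m * Real.pi) = ((Real.cos (m * Real.pi) : ℝ) : ℂ) := by push_cast; rfl
      rw [h, this]
      rcases Int.even_or_odd m with h | h
      · simp [h.neg_one_zpow]
      · simp [h.neg_one_zpow]
    have e3 : Complex.cosh (Real.pi * y) = n := by
      have : Complex.cosh (Real.pi * y) = ((Real.cosh (Real.pi * y) : ℝ) : ℂ) := by push_cast; rfl
      rw [this, hn]; push_cast; rfl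
    refine ⟨(((-1 : ℤˣ) ^ m : ℤˣ) : ℤ) * n, ?_⟩
    rw [e, e2, e3]; push_cast; rfl

lemma norm_cos_le (z : ℂ) : ‖Complex.cos z‖ ≤ Real.exp ‖z‖ := by
  rw [Complex.cos, norm_div, Complex.norm_two]
  have h1 : ‖Complex.exp (z * Complex.I)‖ ≤ Real.exp ‖z‖ := by
    refine (Complex.norm_exp_le_exp_norm _).trans ?_
    simp
  have h2 : ‖Complex.exp (-z * Complex.I)‖ ≤ Real.exp ‖z‖ := by
    refine (Complex.norm_exp_le_exp_norm _).trans ?_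
    simp
  have := norm_add_le (Complex.exp (z * Complex.I)) (Complex.exp (-z * Complex.I))
  linarith

/-- Schottky's theorem, functions omitting `0` and `1`. -/
lemma schottky01 (M : ℝ) : ∃ M' : ℝ, ∀ (c : ℂ) (r : ℝ) (h : ℂ → ℂ), 0 < r →
    DifferentiableOn ℂ h (ball c r) → (∀ z ∈ ball c r, h z ≠ 0) → (∀ z ∈ ball c r, h z ≠ 1) →
    ‖h c‖ ≤ M → ∀ z ∈ ball c (r/2), ‖h z‖ ≤ M' := by
  refine ⟨1 + Real.exp (Real.pi * Real.exp (Real.pi * (3 + 2 * M + 192))), ?_⟩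
  intro c r h hr hd h0 h1 hM z hz
  have hc : c ∈ ball c r := mem_ball_self hr
  obtain ⟨F, hFd, hF, hFc⟩ := cos_lift hr (u := fun z => 2 * h z - 1) (by fun_prop)
    (fun z hz e => h1 z hz (by linear_combination e / 2))
    (fun z hz e => h0 z hz (by linear_combination e / 2))
  have hint : ∀ z ∈ ball c r, ∀ n : ℤ, F z ≠ n := by
    intro z hz n hn
    have e := hF z hz
    rw [hn, mul_comm] at e
    have hs := Complex.sin_sq_add_cos_sq (n * Real.pi)
    rw [Complex.sin_int_mul_pi, e] at hs
    have : h z * (h z - 1) = 0 := by linear_combination hs / 4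
    rcases mul_eq_zero.1 this with h' | h'
    · exact h0 z hz h'
    · exact h1 z hz (by linear_combination h')
  obtain ⟨g, hgd, hg, hgc⟩ := cos_lift hr hFd (fun z hz => by simpa using hint z hz 1)
    (fun z hz => by simpa using hint z hz (-1))
  have hno : ∀ w, ¬ ball w 2 ⊆ g '' ball c r := by
    intro w hw
    obtain ⟨v, hv, n, hn⟩ := exists_grid w
    obtain ⟨x, hx, rfl⟩ := hw hv
    rw [hg x hx] at hn
    exact hint x hx n hn
  have hder : ∀ x ∈ ball c (r/2), ‖deriv g x‖ ≤ 192 / (r/2) := by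
    intro x hx
    have hsub : ball x (r/2) ⊆ ball c r := by
      apply ball_subset_ball'
      rw [mem_ball] at hx; linarith
    exact bloch (by positivity) (hgd.mono hsub) (fun w hw => hno w (hw.trans (image_mono hsub)))
  have hsub : ball c (r/2) ⊆ ball c r := ball_subset_ball (by linarith)
  have hc2 : c ∈ ball c (r/2) := mem_ball_self (by positivity)
  have hgz : ‖g z - g c‖ ≤ 192 / (r/2) * ‖z - c‖ :=
    (convex_ball c (r/2)).norm_image_sub_le_of_norm_deriv_le
      (fun x hx => hgd.differentiableAt (isOpen_ball.mem_nhds (hsub hx))) hder hc2 hz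
  have hgz2 : ‖g z - g c‖ ≤ 192 := by
    refine hgz.trans ?_
    have : ‖z - c‖ ≤ r/2 := by rw [← dist_eq_norm]; exact le_of_lt hz
    calc _ ≤ 192 / (r/2) * (r/2) := by gcongr
      _ = 192 := by field_simp
  have hFc' : ‖F c‖ ≤ 2 + 2 * M := by
    refine hFc.trans ?_
    have := norm_sub_le (2 * h c) 1
    simp at this
    linarith
  have hg3 : ‖g z‖ ≤ 3 + 2 * M + 192 := by
    have := norm_sub_norm_le (g z) (g c)
    linarith
  have hzr := hsub hz
  have hFz : ‖F z‖ ≤ Real.exp (Real.pi * (3 + 2 * M + 192)) := by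
    rw [← hg z hzr]
    refine (norm_cos_le _).trans ?_
    rw [norm_mul, Complex.norm_real, Real.norm_of_nonneg Real.pi_pos.le]
    gcongr
  have hu : ‖2 * h z - 1‖ ≤ Real.exp (Real.pi * Real.exp (Real.pi * (3 + 2 * M + 192))) := by
    rw [← hF z hzr]
    refine (norm_cos_le _).trans ?_
    rw [norm_mul, Complex.norm_real, Real.norm_of_nonneg Real.pi_pos.le]
    gcongr
  have := norm_sub_norm_le (2 * h z) 1
  simp at this
  linarith [norm_nonneg (h z)]

/-- Schottky's theorem, general pair of omitted values. -/
lemma schottky (M R δ : ℝ) (hδ : 0 < δ) : ∃ M' : ℝ, ∀ (c : ℂ) (r : ℝ) (g : ℂ → ℂ) (a b : ℂ), 0 < r →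
    DifferentiableOn ℂ g (ball c r) → (∀ z ∈ ball c r, g z ≠ a) → (∀ z ∈ ball c r, g z ≠ b) →
    ‖a‖ ≤ R → ‖b‖ ≤ R → δ ≤ ‖b - a‖ →
    ‖g c‖ ≤ M → ∀ z ∈ ball c (r/2), ‖g z‖ ≤ M' := by
  obtain ⟨M', hM'⟩ := schottky01 ((M + R) / δ)
  refine ⟨M' * (2 * R) + R, ?_⟩
  intro c r g a b hr hd ha hb haR hbR hab hM z hz
  have hne : b - a ≠ 0 := by
    intro h; rw [h] at hab; simp at hab; linarith
  have h := hM' c r (fun z => (g z - a) / (b - a)) hr (by fun_prop)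
    (fun z hz => div_ne_zero (sub_ne_zero.2 (ha z hz)) hne)
    (fun z hz e => hb z hz (by
      rw [div_eq_one_iff_eq hne] at e; linear_combination e)) (by
      rw [norm_div]
      have := norm_sub_le (g c) a
      have h0 := norm_nonneg (g c)
      have h1 := norm_nonneg a
      have : 0 ≤ M + R := by linarith
      gcongr
      linarith) z hz
  rw [norm_div, div_le_iff₀ (by linarith)] at h
  have h1 := norm_sub_norm_le (g z) a
  have h2 := norm_sub_le b a
  have h3 : 0 ≤ M' := by
    by_contra hneg
    push Not at hneg
    nlinarith [norm_nonneg (g z - a)]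
  have : M' * ‖b - a‖ ≤ M' * (2 * R) := by gcongr; linarith
  linarith

end KJ

namespace KJ
open Metric Set

section
variable {f : ℂ → ℂ}

lemma mem_K {z : ℂ} : z ∈ boundedOrbitSet f ↔ ∃ M : ℝ, ∀ n : ℕ, ‖f^[n] z‖ ≤ M := by
  unfold boundedOrbitSet
  rw [mem_ofPred_eq, isBounded_iff_forall_norm_le]
  simp

lemma K_step (z : ℂ) : f z ∈ boundedOrbitSet f ↔ z ∈ boundedOrbitSet f := by
  rw [mem_K, mem_K]
  constructor
  · rintro ⟨M, hM⟩
    refine ⟨max M ‖z‖, fun n => ?_⟩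
    rcases n with _ | n
    · simp
    · exact (hM n).trans (le_max_left _ _)
  · rintro ⟨M, hM⟩
    exact ⟨M, fun n => hM (n+1)⟩

lemma K_iter (n : ℕ) (z : ℂ) : f^[n] z ∈ boundedOrbitSet f ↔ z ∈ boundedOrbitSet f := by
  induction n generalizing z with
  | zero => rfl
  | succ n ih => rw [Function.iterate_succ_apply, ih, K_step]

lemma J_step (hd : Differentiable ℂ f) (ho : IsOpenMap f) (z : ℂ) :
    f z ∈ frontier (boundedOrbitSet f) ↔ z ∈ frontier (boundedOrbitSet f) := by
  have h := ho.preimage_frontier_eq_frontier_preimage hd.continuous (boundedOrbitSet f)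
  have e : f ⁻¹' boundedOrbitSet f = boundedOrbitSet f := by
    ext w; exact K_step w
  rw [e] at h
  exact Set.ext_iff.1 h z

lemma J_iter (hd : Differentiable ℂ f) (ho : IsOpenMap f) (n : ℕ) (z : ℂ) :
    f^[n] z ∈ frontier (boundedOrbitSet f) ↔ z ∈ frontier (boundedOrbitSet f) := by
  induction n generalizing z with
  | zero => rfl
  | succ n ih => rw [Function.iterate_succ_apply, ih, J_step hd ho]

lemma blow (hd : Differentiable ℂ f) {z : ℂ} (hz : z ∈ frontier (boundedOrbitSet f))
    {r : ℝ} (hr : 0 < r) {R δ : ℝ} (hδ : 0 < δ)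
    (h : ∀ n : ℕ, 1 ≤ n → ∃ a b : ℂ, a ∉ f^[n] '' ball z r ∧ b ∉ f^[n] '' ball z r ∧
      ‖a‖ ≤ R ∧ ‖b‖ ≤ R ∧ δ ≤ ‖b - a‖) : False := by
  rw [frontier_eq_closure_inter_closure] at hz
  obtain ⟨k, hk, hkz⟩ := Metric.mem_closure_iff.1 hz.1 (r/8) (by positivity)
  obtain ⟨p, hp, hpz⟩ := Metric.mem_closure_iff.1 hz.2 (r/8) (by positivity)
  obtain ⟨M, hM⟩ := mem_K.1 hk
  obtain ⟨M', hM'⟩ := schottky M R δ hδ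
  apply hp
  rw [mem_K]
  refine ⟨max M' ‖p‖, fun n => ?_⟩
  rcases Nat.eq_zero_or_pos n with rfl | hn
  · simp
  obtain ⟨a, b, ha, hb, haR, hbR, hab⟩ := h n hn
  have hsub : ball k (r/2) ⊆ ball z r := by
    apply ball_subset_ball'
    rw [dist_comm]; linarith
  refine (hM' k (r/2) (f^[n]) a b (by positivity) (hd.iterate n).differentiableOn
    (fun w hw e => ha ⟨w, hsub hw, e⟩) (fun w hw e => hb ⟨w, hsub hw, e⟩) haR hbR hab (hM n) p ?_).trans
    (le_max_left _ _)
  rw [mem_ball]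
  have := dist_triangle p z k
  rw [dist_comm p z] at this
  linarith

lemma cover (hd : Differentiable ℂ f) {ι : Type} [Finite ι] (x : ι → ℂ) {ε : ℝ} (hε : 0 < ε)
    (hx : ∀ i j, i ≠ j → 3 * ε ≤ dist (x i) (x j))
    {z : ℂ} (hz : z ∈ frontier (boundedOrbitSet f)) {r : ℝ} (hr : 0 < r) :
    ∃ n : ℕ, 1 ≤ n ∧ ∀ i j, i ≠ j → closedBall (x i) ε ⊆ f^[n] '' ball z r ∨
      closedBall (x j) ε ⊆ f^[n] '' ball z r := by
  by_contra hcon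
  push Not at hcon
  obtain ⟨R, hR⟩ : ∃ R, ∀ i, ‖x i‖ ≤ R := by
    obtain ⟨R, hR⟩ := (Set.finite_range (fun i => ‖x i‖)).bddAbove
    exact ⟨R, fun i => hR ⟨i, rfl⟩⟩
  refine blow hd hz hr (R := R + ε) (δ := ε) hε (fun n hn => ?_)
  obtain ⟨i, j, hij, h1, h2⟩ := hcon n hn
  obtain ⟨a, ha, ha'⟩ := not_subset.1 h1
  obtain ⟨b, hb, hb'⟩ := not_subset.1 h2
  rw [mem_closedBall] at ha hb
  have := hx i j hij
  have t1 := dist_triangle (x i) a (x j)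
  have t2 := dist_triangle a b (x j)
  rw [dist_comm (x i) a] at t1
  refine ⟨a, b, ha', hb', ?_, ?_, ?_⟩
  · have := norm_sub_norm_le a (x i)
    rw [← dist_eq_norm] at this
    linarith [hR i]
  · have := norm_sub_norm_le b (x j)
    rw [← dist_eq_norm] at this
    linarith [hR j]
  · rw [← dist_eq_norm, dist_comm]; linarith

lemma perfect (hd : Differentiable ℂ f) (ho : IsOpenMap f) {w₁ w₂ w₃ : ℂ}
    (h₁ : w₁ ∈ frontier (boundedOrbitSet f)) (h₂ : w₂ ∈ frontier (boundedOrbitSet f))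
    (h₃ : w₃ ∈ frontier (boundedOrbitSet f)) (h12 : w₁ ≠ w₂) (h13 : w₁ ≠ w₃) (h23 : w₂ ≠ w₃)
    {z : ℂ} (hz : z ∈ frontier (boundedOrbitSet f)) {r : ℝ} (hr : 0 < r) :
    ∃ y ∈ frontier (boundedOrbitSet f), y ∈ ball z r ∧ y ≠ z := by
  by_contra hcon
  push Not at hcon
  have hno : ∀ n : ℕ, ∀ w ∈ frontier (boundedOrbitSet f), w ≠ f^[n] z → w ∉ f^[n] '' ball z r := by
    rintro n w hw hne ⟨x, hx, rfl⟩
    exact hne (by rw [hcon x ((J_iter hd ho n x).1 hw) hx])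
  have p12 := dist_pos.2 h12
  have p13 := dist_pos.2 h13
  have p23 := dist_pos.2 h23
  have n1 := norm_nonneg w₁
  have n2 := norm_nonneg w₂
  have n3 := norm_nonneg w₃
  refine blow hd hz hr (R := ‖w₁‖ + ‖w₂‖ + ‖w₃‖)
    (δ := min (dist w₁ w₂) (min (dist w₁ w₃) (dist w₂ w₃))) (by positivity) (fun n _ => ?_)
  by_cases e1 : w₁ = f^[n] z
  · refine ⟨w₂, w₃, hno n _ h₂ (fun e => h12 (e1.trans e.symm)), hno n _ h₃ (fun e => h13 (e1.trans e.symm)), by linarith, by linarith, ?_⟩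
    rw [← dist_eq_norm, dist_comm w₃]
    exact (min_le_right _ _).trans (min_le_right _ _)
  · by_cases e2 : w₂ = f^[n] z
    · refine ⟨w₁, w₃, hno n _ h₁ e1, hno n _ h₃ (fun e => h23 (e2.trans e.symm)), by linarith, by linarith, ?_⟩
      rw [← dist_eq_norm, dist_comm w₃]
      exact (min_le_right _ _).trans (min_le_left _ _)
    · refine ⟨w₁, w₂, hno n _ h₁ e1, hno n _ h₂ e2, by linarith, by linarith, ?_⟩
      rw [← dist_eq_norm, dist_comm w₂ w₁]
      exact min_le_left _ _

lemma two_point (hd : Differentiable ℂ f) (ho : IsOpenMap f) {a b : ℂ} (hab : a ≠ b)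
    (hJ : frontier (boundedOrbitSet f) = {a, b}) : False := by
  have hA : ∀ n : ℕ, f^[n] a = a ∨ f^[n] a = b := by
    intro n
    have : f^[n] a ∈ frontier (boundedOrbitSet f) := (J_iter hd ho n a).2 (by rw [hJ]; simp)
    rw [hJ] at this; simpa using this
  have hB : ∀ n : ℕ, ∀ z, z ≠ a → z ≠ b → f^[n] z ≠ a ∧ f^[n] z ≠ b := by
    intro n z h1 h2
    have : f^[n] z ∉ frontier (boundedOrbitSet f) := by
      rw [J_iter hd ho n z, hJ]; simp [h1, h2]
    rw [hJ] at this; simpa using this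
  set r := ‖b - a‖ with hrd
  have hr : 0 < r := norm_pos_iff.2 (sub_ne_zero.2 hab.symm)
  have hpi := Real.pi_pos
  set q := Real.log r - 16 * Real.pi with hq
  set ρ := Real.exp q with hρd
  have hρ : 0 < ρ := Real.exp_pos _
  have hρr : ρ < r := by
    rw [← Real.exp_log hr, hρd]
    exact Real.exp_lt_exp.2 (by linarith)
  obtain ⟨M', hM'⟩ := schottky (‖a‖ + ‖b‖ + r + 1) (‖a‖ + ‖b‖) r hr
  have na := norm_nonneg a
  have nb := norm_nonneg b
  -- representation of the points on the circle
  have hrep : ∀ z ∈ sphere a ρ, ∃ w : ℂ, w.re = q ∧ |w.im| ≤ Real.pi ∧ a + Complex.exp w = z := by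
    intro z hz
    have hz' : ‖z - a‖ = ρ := by rw [← dist_eq_norm]; exact hz
    have hne : z - a ≠ 0 := by
      intro h; rw [h] at hz'; simp at hz'; linarith
    refine ⟨Complex.log (z - a), ?_, ?_, ?_⟩
    · rw [Complex.log_re, hz', hρd, Real.log_exp]
    · rw [Complex.log_im]; exact Complex.abs_arg_le_pi _
    · rw [Complex.exp_log hne]; ring
  have hcirc : ∀ n : ℕ, ∀ z₁ ∈ sphere a ρ, ∀ z₂ ∈ sphere a ρ, ‖f^[n] z₁‖ ≤ ‖a‖ + ‖b‖ + r + 1 →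
      ‖f^[n] z₂‖ ≤ M' := by
    intro n z₁ hz₁ z₂ hz₂ hle
    obtain ⟨w₁, hw₁, hi₁, rfl⟩ := hrep z₁ hz₁
    obtain ⟨w₂, hw₂, hi₂, rfl⟩ := hrep z₂ hz₂
    have hout : ∀ w ∈ ball w₁ (16 * Real.pi), a + Complex.exp w ≠ a ∧ a + Complex.exp w ≠ b := by
      intro w hw
      constructor
      · simp
      · intro e
        have e' : Complex.exp w = b - a := by rw [← e]; ring
        have : ‖Complex.exp w‖ = r := by rw [e']
        rw [Complex.norm_exp] at this
        have h1 : w.re = Real.log r := by rw [← this, Real.log_exp]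
        rw [mem_ball, dist_eq_norm] at hw
        have h2 := (Complex.abs_re_le_norm (w - w₁)).trans_lt hw
        rw [Complex.sub_re, hw₁, h1, hq] at h2
        have h3 := le_abs_self (Real.log r - (Real.log r - 16 * Real.pi))
        linarith
    have hdf := hd.iterate n
    have hdG : Differentiable ℂ (fun w => f^[n] (a + Complex.exp w)) := by
      fun_prop
    refine hM' w₁ (16 * Real.pi) (fun w => f^[n] (a + Complex.exp w)) a b (by positivity) hdG.differentiableOn
      (fun w hw => (hB n _ (hout w hw).1 (hout w hw).2).1)
      (fun w hw => (hB n _ (hout w hw).1 (hout w hw).2).2) (by linarith) (by linarith) le_rfl hle w₂ ?_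
    rw [mem_ball, dist_eq_norm]
    refine (Complex.norm_le_abs_re_add_abs_im _).trans_lt ?_
    rw [Complex.sub_re, Complex.sub_im, hw₁, hw₂, sub_self, abs_zero]
    have := abs_sub w₂.im w₁.im
    linarith
  have hbdd : Bornology.IsBounded (ball a ρ) := isBounded_ball
  have hfr : frontier (ball a ρ) = sphere a ρ := frontier_ball a hρ.ne'
  have hcl : closure (ball a ρ) = closedBall a ρ := closure_ball a hρ.ne'
  have hsmall : ∀ n : ℕ, ∃ z ∈ sphere a ρ, ‖f^[n] z‖ ≤ ‖a‖ + ‖b‖ + r + 1 := by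
    intro n
    by_contra hcon
    push Not at hcon
    obtain ⟨e, he, hea, her⟩ : ∃ e, (e = a ∨ e = b) ∧ f^[n] a ≠ e ∧ ‖f^[n] a - e‖ = r := by
      rcases hA n with h | h
      · exact ⟨b, Or.inr rfl, by rw [h]; exact hab, by rw [h, hrd, norm_sub_rev]⟩
      · exact ⟨a, Or.inl rfl, by rw [h]; exact hab.symm, by rw [h, hrd]⟩
    have hne : ∀ z ∈ closedBall a ρ, f^[n] z - e ≠ 0 := by
      intro z hz h0
      have h0 : f^[n] z = e := sub_eq_zero.1 h0
      by_cases hza : z = a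
      · rw [hza] at h0; exact hea h0
      · have hzb : z ≠ b := by
          rintro rfl
          rw [mem_closedBall, dist_eq_norm] at hz
          linarith
        have := hB n z hza hzb
        rcases he with rfl | rfl
        · exact this.1 h0
        · exact this.2 h0
    have hdf := hd.iterate n
    have hdiff : DiffContOnCl ℂ (fun z => (f^[n] z - e)⁻¹) (ball a ρ) := by
      apply DifferentiableOn.diffContOnCl
      rw [hcl]
      exact DifferentiableOn.inv (by fun_prop) hne
    have hle := Complex.norm_le_of_forall_mem_frontier_norm_le hbdd hdiff (C := (r + 1)⁻¹) (by
      intro z hz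
      rw [hfr] at hz
      rw [norm_inv]
      have h1 := hcon z hz
      have h2 := norm_sub_norm_le (f^[n] z) e
      have h3 : ‖e‖ ≤ ‖a‖ + ‖b‖ := by rcases he with rfl | rfl <;> linarith
      gcongr
      linarith) (subset_closure (mem_ball_self hρ))
    rw [norm_inv, her] at hle
    have := (inv_le_inv₀ hr (by linarith)).1 hle
    linarith
  have hin : ball a ρ ⊆ boundedOrbitSet f := by
    intro z hz
    rw [mem_K]
    refine ⟨M', fun n => ?_⟩
    obtain ⟨z₁, hz₁, hle⟩ := hsmall n
    refine Complex.norm_le_of_forall_mem_frontier_norm_le hbdd (hd.iterate n).diffContOnCl (C := M') ?_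
      (subset_closure hz)
    intro z₂ hz₂
    rw [hfr] at hz₂
    exact hcirc n z₁ hz₁ z₂ hz₂ hle
  have hint : a ∈ interior (boundedOrbitSet f) := mem_interior.2 ⟨_, hin, isOpen_ball, mem_ball_self hρ⟩
  have : a ∈ frontier (boundedOrbitSet f) := by rw [hJ]; simp
  exact this.2 hint

lemma path (hd : Differentiable ℂ f) (ho : IsOpenMap f) {ι : Type} [Finite ι] (x : ι → ℂ) {ε : ℝ}
    (hε : 0 < ε) (hx : ∀ i, x i ∈ frontier (boundedOrbitSet f)) (z : ℂ) (r : ℝ)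
    (T : ι → ℕ) (hT : ∀ i, 1 ≤ T i) (T₀ : ℕ) (st : ℕ → ι) (τ : ℕ → ℕ) (hτ0 : τ 0 = T₀)
    (hτ : ∀ k, τ (k+1) = τ k + T (st k))
    (h0 : closedBall (x (st 0)) ε ⊆ f^[T₀] '' ball z r)
    (hs : ∀ k, closedBall (x (st (k+1))) ε ⊆ f^[T (st k)] '' ball (x (st k)) ε) :
    ∃ p ∈ boundedOrbitSet f ∩ frontier (boundedOrbitSet f), p ∈ closedBall z r ∧
      ∀ k, f^[τ k] p ∈ closedBall (x (st k)) ε := by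
  set J := frontier (boundedOrbitSet f) with hJ
  let S : ℕ → Set ℂ := fun k => {p | p ∈ closedBall z r ∩ J ∧ ∀ j < k, f^[τ j] p ∈ closedBall (x (st j)) ε}
  have hreach : ∀ k, ∀ w ∈ closedBall (x (st k)) ε ∩ J, ∃ p ∈ S k, f^[τ k] p = w := by
    intro k
    induction k with
    | zero =>
      rintro w ⟨hw, hwJ⟩
      obtain ⟨p, hp, rfl⟩ := h0 hw
      exact ⟨p, ⟨⟨ball_subset_closedBall hp, (J_iter hd ho _ _).1 hwJ⟩, by simp⟩, by rw [hτ0]⟩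
    | succ k ih =>
      rintro w ⟨hw, hwJ⟩
      obtain ⟨w', hw', rfl⟩ := hs k hw
      obtain ⟨p, hp, hpw⟩ := ih w' ⟨ball_subset_closedBall hw', (J_iter hd ho _ _).1 hwJ⟩
      refine ⟨p, ⟨hp.1, fun j hj => ?_⟩, ?_⟩
      · rcases Nat.lt_succ_iff_lt_or_eq.1 hj with h | rfl
        · exact hp.2 j h
        · rw [hpw]; exact ball_subset_closedBall hw'
      · rw [hτ, add_comm, Function.iterate_add_apply, hpw]
  have hne : ∀ k, (S k).Nonempty := by
    intro k
    obtain ⟨p, hp, -⟩ := hreach k (x (st k)) ⟨mem_closedBall_self hε.le, hx _⟩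
    exact ⟨p, hp⟩
  have hclosed : ∀ k, IsClosed (S k) := by
    intro k
    have : S k = (closedBall z r ∩ J) ∩ ⋂ j, ⋂ (_ : j < k), f^[τ j] ⁻¹' closedBall (x (st j)) ε := by
      ext p; simp [S]
    rw [this]
    refine (isClosed_closedBall.inter isClosed_frontier).inter ?_
    exact isClosed_iInter fun j => isClosed_iInter fun _ => isClosed_closedBall.preimage (hd.continuous.iterate _)
  have hcomp : IsCompact (S 0) :=
    (isCompact_closedBall z r).of_isClosed_subset (hclosed 0) (fun p hp => hp.1.1)
  obtain ⟨p, hp⟩ := IsCompact.nonempty_iInter_of_sequence_nonempty_isCompact_isClosed S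
    (fun k p hp => ⟨hp.1, fun j hj => hp.2 j (by omega)⟩) hne hcomp hclosed
  rw [mem_iInter] at hp
  have hit : ∀ k, f^[τ k] p ∈ closedBall (x (st k)) ε := fun k => (hp (k+1)).2 k (by omega)
  refine ⟨p, ⟨?_, (hp 0).1.2⟩, (hp 0).1.1, hit⟩
  rw [← K_iter T₀, mem_K]
  obtain ⟨N, hN⟩ : ∃ N, ∀ i, T i ≤ N := by
    obtain ⟨N, hN⟩ := (Set.finite_range T).bddAbove
    exact ⟨N, fun i => hN ⟨i, rfl⟩⟩
  have hC : IsCompact (⋃ j ∈ Finset.range (N+1), ⋃ i, f^[j] '' closedBall (x i) ε) := by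
    refine (Finset.range (N+1)).isCompact_biUnion fun j _ => isCompact_iUnion fun i => ?_
    exact (isCompact_closedBall _ _).image (hd.continuous.iterate _)
  obtain ⟨M, hM⟩ := hC.isBounded.exists_norm_le
  refine ⟨M, fun n => hM _ ?_⟩
  -- locate `n`
  have hloc : ∀ n : ℕ, ∃ k j, j < T (st k) ∧ n + T₀ = τ k + j := by
    intro n
    induction n with
    | zero => exact ⟨0, 0, hT _, by rw [hτ0]; omega⟩
    | succ n ih =>
      obtain ⟨k, j, hj, e⟩ := ih
      by_cases hlt : j + 1 < T (st k)
      · exact ⟨k, j+1, hlt, by omega⟩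
      · exact ⟨k+1, 0, hT _, by rw [hτ]; omega⟩
  obtain ⟨k, j, hj, e⟩ := hloc n
  rw [← Function.iterate_add_apply, e, add_comm (τ k) j, Function.iterate_add_apply]
  simp only [mem_iUnion]
  exact ⟨j, Finset.mem_range.2 (by have := hN (st k); omega), st k, _, hit k, rfl⟩

lemma avoid (hd : Differentiable ℂ f) (ho : IsOpenMap f) {w₁ w₂ w₃ : ℂ}
    (h₁ : w₁ ∈ frontier (boundedOrbitSet f)) (h₂ : w₂ ∈ frontier (boundedOrbitSet f))
    (h₃ : w₃ ∈ frontier (boundedOrbitSet f)) (h12 : w₁ ≠ w₂) (h13 : w₁ ≠ w₃) (h23 : w₂ ≠ w₃)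
    {U : Set ℂ} (hU : IsOpen U) (hUJ : (frontier (boundedOrbitSet f) ∩ U).Nonempty)
    {S : Set ℂ} (hS : S.Finite) : ∃ y ∈ frontier (boundedOrbitSet f), y ∈ U ∧ y ∉ S := by
  obtain ⟨z, hz, hzU⟩ := hUJ
  have hopen : IsOpen (U ∩ (S \ {z})ᶜ) := hU.inter (hS.subset sdiff_subset).isClosed.isOpen_compl
  obtain ⟨r, hr, hsub⟩ := Metric.isOpen_iff.1 hopen z ⟨hzU, by simp⟩
  obtain ⟨y, hy, hyb, hyz⟩ := perfect hd ho h₁ h₂ h₃ h12 h13 h23 hz hr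
  have := hsub hyb
  exact ⟨y, hy, this.1, fun hyS => this.2 ⟨hyS, hyz⟩⟩

/-- Symbolic states: last symbol, choice of disc, and the elapsed time. -/
def run (T : Bool × Bool → ℕ) (σ : Bool × Bool → Bool → Bool) (T₀ : ℕ) (σ₀ : Bool → Bool)
    (s : ℕ → Bool) : ℕ → (Bool × Bool) × ℕ
  | 0 => ((s 0, σ₀ (s 0)), T₀)
  | k+1 => ((s (k+1), σ (run T σ T₀ σ₀ s k).1 (s (k+1))), (run T σ T₀ σ₀ s k).2 + T (run T σ T₀ σ₀ s k).1)

lemma run_fst (T : Bool × Bool → ℕ) (σ : Bool × Bool → Bool → Bool) (T₀ : ℕ) (σ₀ : Bool → Bool)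
    (s : ℕ → Bool) (k : ℕ) : (run T σ T₀ σ₀ s k).1.1 = s k := by
  cases k <;> rfl

lemma run_congr (T : Bool × Bool → ℕ) (σ : Bool × Bool → Bool → Bool) (T₀ : ℕ) (σ₀ : Bool → Bool)
    (s t : ℕ → Bool) (k : ℕ) (h : ∀ j ≤ k, s j = t j) : run T σ T₀ σ₀ s k = run T σ T₀ σ₀ t k := by
  induction k with
  | zero => simp [run, h 0 le_rfl]
  | succ k ih =>
    have := ih (fun j hj => h j (by omega))
    simp [run, this, h (k+1) le_rfl]

lemma run_time_congr (T : Bool × Bool → ℕ) (σ : Bool × Bool → Bool → Bool) (T₀ : ℕ) (σ₀ : Bool → Bool)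
    (s t : ℕ → Bool) (k : ℕ) (h : ∀ j < k, s j = t j) :
    (run T σ T₀ σ₀ s k).2 = (run T σ T₀ σ₀ t k).2 := by
  cases k with
  | zero => rfl
  | succ k =>
    have := run_congr T σ T₀ σ₀ s t k (fun j hj => h j (by omega))
    simp [run, this]

lemma symbolic (hd : Differentiable ℂ f) (ho : IsOpenMap f) {w₁ w₂ w₃ : ℂ}
    (h₁ : w₁ ∈ frontier (boundedOrbitSet f)) (h₂ : w₂ ∈ frontier (boundedOrbitSet f))
    (h₃ : w₃ ∈ frontier (boundedOrbitSet f)) (h12 : w₁ ≠ w₂) (h13 : w₁ ≠ w₃) (h23 : w₂ ≠ w₃)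
    (U : Bool → Set ℂ) (hU : ∀ s, IsOpen (U s))
    (hUJ : ∀ s, (frontier (boundedOrbitSet f) ∩ U s).Nonempty)
    {z : ℂ} (hz : z ∈ frontier (boundedOrbitSet f)) {V : Set ℂ} (hV : IsOpen V) (hzV : z ∈ V) :
    ∃ Φ : (ℕ → Bool) → ℂ, (∀ s, Φ s ∈ boundedOrbitSet f ∩ frontier (boundedOrbitSet f) ∧ Φ s ∈ V) ∧
      ∀ s t, s ≠ t → ∃ n i, f^[n] (Φ s) ∈ U i ∧ f^[n] (Φ t) ∈ U (!i) := by
  have av := fun (s : Bool) (S : Set ℂ) (hS : S.Finite) =>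
    avoid hd ho h₁ h₂ h₃ h12 h13 h23 (hU s) (hUJ s) hS
  obtain ⟨a, haJ, haU, -⟩ := av false ∅ finite_empty
  obtain ⟨b, hbJ, hbU, hb⟩ := av false {a} (finite_singleton a)
  obtain ⟨c, hcJ, hcU, hc⟩ := av true {a, b} (by simp)
  obtain ⟨d, hdJ, hdU, hd'⟩ := av true {a, b, c} (by simp)
  simp only [mem_singleton_iff, mem_insert_iff, not_or] at hb hc hd'
  let x : Bool × Bool → ℂ := fun i => match i with
    | (false, false) => a
    | (false, true) => b
    | (true, false) => c
    | (true, true) => d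
  have hxJ : ∀ i, x i ∈ frontier (boundedOrbitSet f) := by
    rintro ⟨_ | _, _ | _⟩ <;> assumption
  have hxU : ∀ i, x i ∈ U i.1 := by
    rintro ⟨_ | _, _ | _⟩ <;> assumption
  have hxinj : Function.Injective x := by
    rintro ⟨_ | _, _ | _⟩ ⟨_ | _, _ | _⟩ h <;> simp only [x] at h ⊢ <;> grind
  obtain ⟨ε, hε, hsep, hball⟩ : ∃ ε > 0, (∀ i j, i ≠ j → 3 * ε ≤ dist (x i) (x j)) ∧
      ∀ i, closedBall (x i) ε ⊆ U i.1 := by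
    have ev1 : ∀ᶠ ε in 𝓝[>] (0:ℝ), ∀ i j, i ≠ j → 3 * ε ≤ dist (x i) (x j) := by
      rw [eventually_all]; intro i
      rw [eventually_all]; intro j
      by_cases hij : i = j
      · simp [hij]
      · have hpos : 0 < dist (x i) (x j) / 3 := by
          have := dist_pos.2 (fun h => hij (hxinj h)); positivity
        filter_upwards [Ioc_mem_nhdsGT hpos] with ε hε _
        have := hε.2
        linarith
    have ev2 : ∀ᶠ ε in 𝓝[>] (0:ℝ), ∀ i, closedBall (x i) ε ⊆ U i.1 := by
      rw [eventually_all]; intro i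
      obtain ⟨r, hr, hsub⟩ := Metric.isOpen_iff.1 (hU i.1) (x i) (hxU i)
      filter_upwards [Ioo_mem_nhdsGT hr] with ε hε
      exact (closedBall_subset_ball hε.2).trans hsub
    obtain ⟨ε, h, h1, h2⟩ := ((eventually_mem_nhdsWithin (a := (0:ℝ)) (s := Ioi 0)).and (ev1.and ev2)).exists
    exact ⟨ε, h, h1, h2⟩
  obtain ⟨r, hr, hrV⟩ : ∃ r > 0, closedBall z r ⊆ V := by
    obtain ⟨r, hr, hsub⟩ := Metric.isOpen_iff.1 hV z hzV
    exact ⟨r/2, by positivity, (closedBall_subset_ball (by linarith)).trans hsub⟩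
  have trans : ∀ y ∈ frontier (boundedOrbitSet f), ∀ r' > 0, ∃ n : ℕ, 1 ≤ n ∧ ∃ σ : Bool → Bool,
      ∀ s, closedBall (x (s, σ s)) ε ⊆ f^[n] '' ball y r' := by
    intro y hy r' hr'
    obtain ⟨n, hn, h⟩ := cover hd x hε hsep hy hr'
    refine ⟨n, hn, ?_⟩
    have : ∀ s : Bool, ∃ i : Bool, closedBall (x (s, i)) ε ⊆ f^[n] '' ball y r' := by
      intro s
      rcases h (s, false) (s, true) (by simp) with h | h
      · exact ⟨_, h⟩
      · exact ⟨_, h⟩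
    choose σ hσ using this
    exact ⟨σ, hσ⟩
  obtain ⟨T₀, -, σ₀, hσ₀⟩ := trans z hz r hr
  choose T hT σ hσ using fun i => trans (x i) (hxJ i) ε hε
  have hp := fun s : ℕ → Bool => path hd ho x hε hxJ z r T hT T₀ (fun k => (run T σ T₀ σ₀ s k).1)
    (fun k => (run T σ T₀ σ₀ s k).2) rfl (fun k => rfl) (hσ₀ (s 0)) (fun k => hσ _ (s (k+1)))
  choose Φ hΦ hΦz hΦit using hp
  refine ⟨Φ, fun s => ⟨hΦ s, hrV (hΦz s)⟩, fun s t hst => ?_⟩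
  have hex : ∃ k, s k ≠ t k := Function.ne_iff.1 hst
  classical
  have hk := Nat.find_spec hex
  have hmin : ∀ j < Nat.find hex, s j = t j := fun j hj => not_not.1 (Nat.find_min hex hj)
  set k := Nat.find hex
  refine ⟨(run T σ T₀ σ₀ s k).2, s k, ?_, ?_⟩
  · have := hball _ (hΦit s k)
    rwa [run_fst] at this
  · have := hball _ (hΦit t k)
    rw [run_fst] at this
    rw [run_time_congr T σ T₀ σ₀ s t k hmin]
    have e : t k = !(s k) := by
      cases h1 : s k <;> cases h2 : t k <;> simp_all
    rwa [e] at this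

end

end KJ

/-- Either `K(f) ∩ ∂K(f)` is connected, or every open neighbourhood of every point of
`∂K(f)` meets uncountably many connected components of `K(f) ∩ ∂K(f)`. -/
theorem KJ_connected_or_uncountably_many_components (f : ℂ → ℂ)
    (hf : TranscendentalEntire f) :
    IsConnected (boundedOrbitSet f ∩ frontier (boundedOrbitSet f)) ∨
      ∀ z ∈ frontier (boundedOrbitSet f), ∀ V : Set ℂ, IsOpen V → z ∈ V →
        ¬ {C : Set ℂ |
            (∃ w ∈ boundedOrbitSet f ∩ frontier (boundedOrbitSet f),
              C = connectedComponentIn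
                (boundedOrbitSet f ∩ frontier (boundedOrbitSet f)) w) ∧
            (C ∩ V).Nonempty}.Countable := by
  obtain ⟨hd, hnp⟩ := hf
  have ho : IsOpenMap f := by
    rcases (hd.differentiableOn.analyticOnNhd isOpen_univ).is_constant_or_isOpenMap with ⟨w, hw⟩ | h
    · exact absurd ⟨Polynomial.C w, fun z => by simp [hw z]⟩ hnp
    · exact h
  by_cases h3 : ∃ w₁ ∈ frontier (boundedOrbitSet f), ∃ w₂ ∈ frontier (boundedOrbitSet f),
      ∃ w₃ ∈ frontier (boundedOrbitSet f), w₁ ≠ w₂ ∧ w₁ ≠ w₃ ∧ w₂ ≠ w₃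
  · obtain ⟨w₁, h₁, w₂, h₂, w₃, h₃, h12, h13, h23⟩ := h3
    rw [or_iff_not_imp_left]
    intro hnc z hz V hV hzV hcount
    set E := boundedOrbitSet f ∩ frontier (boundedOrbitSet f) with hE
    have hEne : E.Nonempty := by
      obtain ⟨Φ, hΦ, -⟩ := KJ.symbolic hd ho h₁ h₂ h₃ h12 h13 h23 (fun _ => Set.univ)
        (fun _ => isOpen_univ) (fun _ => ⟨w₁, h₁, trivial⟩) hz hV hzV
      exact ⟨_, (hΦ fun _ => false).1⟩
    have hnp : ¬ IsPreconnected E := fun h => hnc ⟨hEne, h⟩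
    unfold IsPreconnected at hnp
    push Not at hnp
    obtain ⟨u, v, hu, hv, hcov, ⟨p, hpE, hpu⟩, ⟨q, hqE, hqv⟩, hemp⟩ := hnp
    obtain ⟨Φ, hΦ, hsep⟩ := KJ.symbolic hd ho h₁ h₂ h₃ h12 h13 h23 (fun i => cond i v u)
      (by rintro (_ | _) <;> assumption)
      (by rintro (_ | _); exacts [⟨p, hpE.2, hpu⟩, ⟨q, hqE.2, hqv⟩]) hz hV hzV
    have hinj : Function.Injective (fun s => connectedComponentIn E (Φ s)) := by
      intro s t hst
      by_contra hne
      obtain ⟨n, i, hs, ht⟩ := hsep s t hne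
      set C := connectedComponentIn E (Φ s) with hC
      have hsC : Φ s ∈ C := mem_connectedComponentIn (hΦ s).1
      have htC : Φ t ∈ C := by
        have : C = connectedComponentIn E (Φ t) := hst
        rw [this]; exact mem_connectedComponentIn (hΦ t).1
      have hCE : C ⊆ E := connectedComponentIn_subset _ _
      have himE : f^[n] '' C ⊆ E := by
        rintro _ ⟨y, hy, rfl⟩
        exact ⟨(KJ.K_iter n y).2 (hCE hy).1, (KJ.J_iter hd ho n y).2 (hCE hy).2⟩
      have hpre : IsPreconnected (f^[n] '' C) :=
        isPreconnected_connectedComponentIn.image _ (hd.continuous.iterate n).continuousOn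
      have hmu : (f^[n] '' C ∩ u).Nonempty := by
        cases i
        · exact ⟨_, ⟨_, hsC, rfl⟩, hs⟩
        · exact ⟨_, ⟨_, htC, rfl⟩, ht⟩
      have hmv : (f^[n] '' C ∩ v).Nonempty := by
        cases i
        · exact ⟨_, ⟨_, htC, rfl⟩, ht⟩
        · exact ⟨_, ⟨_, hsC, rfl⟩, hs⟩
      obtain ⟨y, hy, hyuv⟩ := hpre u v hu hv (himE.trans hcov) hmu hmv
      have : y ∈ E ∩ (u ∩ v) := ⟨himE hy, hyuv⟩
      rw [hemp] at this
      exact this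
    have hc2 : (Set.range (fun s => connectedComponentIn E (Φ s))).Countable := by
      refine hcount.mono ?_
      rintro _ ⟨s, rfl⟩
      exact ⟨⟨Φ s, (hΦ s).1, rfl⟩, ⟨Φ s, mem_connectedComponentIn (hΦ s).1, (hΦ s).2⟩⟩
    have hc3 : Countable (ℕ → Bool) := by
      have := hc2.preimage_of_injOn (f := fun s => connectedComponentIn E (Φ s)) hinj.injOn
      rw [Set.preimage_range] at this
      exact Set.countable_univ_iff.1 this
    obtain ⟨g, hg⟩ := exists_surjective_nat (ℕ → Bool)
    obtain ⟨n, hn⟩ := hg (fun n => !(g n n))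
    have := congrFun hn n
    simp at this
  · push Not at h3
    rcases (frontier (boundedOrbitSet f)).eq_empty_or_nonempty with he | ⟨a, ha⟩
    · right
      intro z hz
      rw [he] at hz
      exact absurd hz (Set.notMem_empty z)
    by_cases h2 : ∃ b ∈ frontier (boundedOrbitSet f), b ≠ a
    · obtain ⟨b, hb, hba⟩ := h2
      exfalso
      refine KJ.two_point hd ho hba.symm (Set.Subset.antisymm ?_ ?_)
      · intro y hy
        by_cases hya : y = a
        · simp [hya]
        · simp [(h3 a ha b hb y hy hba.symm (Ne.symm hya)).symm]
      · rintro y (rfl | rfl) <;> assumption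
    · push Not at h2
      left
      have haK : a ∈ boundedOrbitSet f := by
        rw [KJ.mem_K]
        exact ⟨‖a‖, fun n => by rw [h2 _ ((KJ.J_iter hd ho n a).2 ha)]⟩
      have : boundedOrbitSet f ∩ frontier (boundedOrbitSet f) = {a} := by
        ext y
        constructor
        · intro hy; exact h2 y hy.2
        · rintro rfl; exact ⟨haK, ha⟩
      rw [this]
      exact isConnected_singleton
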